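/- (Theorem 4 of the paper, asymptotic part.) Let m ≥ 1, d = 2m, s > ν ≥ 1, r ≥ s, and let L : ℝ^d → ℝ^ν be C^∞. Let (ĉ_ℓ, b̂_ℓ)_{ℓ=1}^r be a quadrature on [0,1] exact for polynomials of degree ≤ 2r−1. Suppose that for each h ∈ (0, h₀] there are a polynomial map u_h : [0,h] → ℝ^d of degree ≤ s with range in a fixed compact set, vectors γ̂₀(h), …, γ̂_{s−1}(h) ∈ ℝ^d with γ̂_j(h) = O(h^j), and reals η̂_j(h) with η̂_j(h) = 1 for j ≤ s−ν−1 and η̂_j(h) = 1 − h^{2(s−1−j)} α̂_j(h) otherwise, with α̂_j(h) = O(h²) and with the α̂_j(h) satisfying Σ_{j=s−ν}^{s−1} h^{2(s−1−j)} α̂_j(h) φ̂_j(h)^T γ̂_j(h) = Σ_{j=0}^{s−1} φ̂_j(h)^T γ̂_j(h), where φ̂_j(h) = Σ_{ℓ=1}^r b̂_ℓ P_j(ĉ_ℓ) ∇L(u_h(ĉ_ℓ h)), and such that u_h'(ch) = Σ_{j=0}^{s−1} P_j(c) η̂_j(h) γ̂_j(h) for c ∈ [0,1]. Then L(u_h(h))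 − L(u_h(0)) is O(h^{2r+1}) as h → 0⁺. -/

import Mathlib

open MeasureTheory Polynomial
open scoped RealInnerProductSpace

/-- The shifted Legendre polynomial `P j`, orthonormal on `[0,1]`. -/
noncomputable def legP (j : ℕ) : ℝ → ℝ := fun x =>
  (Real.sqrt (2 * j + 1) / (Nat.factorial j)) *
    (Polynomial.derivative^[j] ((Polynomial.X ^ 2 - Polynomial.X) ^ j)).eval x

/-!
Write `w c = u_h (c h)`. The orthogonality relation says precisely that the quadrature applied to
the derivative of `L ∘ w` gives zero, so `L (w 1) - L (w 0)` is the quadrature error of that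
derivative; for a quadrature exact in degree `n`, Taylor's theorem bounds this error by the
derivative of `L ∘ w` of order `n + 2`. Since `P_j` has degree at most `j` and `γ̂_j = O(h ^ j)`,
differentiating `w` `i` times kills all terms with `j + 1 < i`, whence `w⁽ⁱ⁾ = O(h ^ i)`; by
Faà di Bruno `L ∘ w` inherits this scaling.
-/

section Development

open Set Filter Asymptotics
open scoped Topology Nat ContDiff Gradient

section Quadrature

variable {F ι : Type*} [NormedAddCommGroup F] [NormedSpace ℝ F] [Fintype ι]
  {c b : ι → ℝ} {n : ℕ}

/-- The quadrature rule on `[0,1]` with nodes `c` and weights `b` has degree of exactness at least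
`n`: it integrates every polynomial of degree at most `n` exactly. -/
def IsExactQuadrature (c b : ι → ℝ) (n : ℕ) : Prop :=
  ∀ q : ℝ[X], q.natDegree ≤ n → ∑ ℓ, b ℓ * q.eval (c ℓ) = ∫ x in (0 : ℝ)..1, q.eval x

theorem norm_integral_sub_quadrature_le (hc : ∀ ℓ, c ℓ ∈ Icc (0 : ℝ) 1) {f : ℝ → F} {C : ℝ}
    (hf : ∀ x ∈ Icc (0 : ℝ) 1, ‖f x‖ ≤ C) :
    ‖(∫ x in (0 : ℝ)..1, f x) - ∑ ℓ, b ℓ • f (c ℓ)‖ ≤ (1 + ∑ ℓ, |b ℓ|) * C := by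
  have hintegral : ‖∫ x in (0 : ℝ)..1, f x‖ ≤ C := by
    have hf' : ∀ x ∈ uIoc (0 : ℝ) 1, ‖f x‖ ≤ C := fun x hx =>
      hf x (Ioc_subset_Icc_self (uIoc_of_le (zero_le_one' ℝ) ▸ hx))
    simpa using intervalIntegral.norm_integral_le_of_norm_le_const hf'
  have hsum : ‖∑ ℓ, b ℓ • f (c ℓ)‖ ≤ ∑ ℓ, |b ℓ| * C := norm_sum_le_of_le _ fun ℓ _ => by
    rw [norm_smul, Real.norm_eq_abs]
    exact mul_le_mul_of_nonneg_left (hf _ (hc ℓ)) (abs_nonneg _)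
  calc _ ≤ C + ∑ ℓ, |b ℓ| * C := (norm_sub_le _ _).trans (add_le_add hintegral hsum)
    _ = (1 + ∑ ℓ, |b ℓ|) * C := by rw [← Finset.sum_mul]; ring

theorem IsExactQuadrature.sum_smul_taylorWithinEval [CompleteSpace F]
    (hq : IsExactQuadrature c b n) (f : ℝ → F) (S : Set ℝ) (x₀ : ℝ) :
    ∑ ℓ, b ℓ • taylorWithinEval f n S x₀ (c ℓ) =
      ∫ x in (0 : ℝ)..1, taylorWithinEval f n S x₀ x := by
  let q (k : ℕ) : ℝ[X] := C ((k ! : ℝ)⁻¹) * (X - C x₀) ^ k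
  have hqdeg (k : ℕ) : (q k).natDegree ≤ k :=
    (natDegree_C_mul_le _ _).trans
      ((natDegree_pow_le_of_le k (natDegree_X_sub_C_le x₀)).trans_eq (mul_one k))
  have htaylor (x : ℝ) : taylorWithinEval f n S x₀ x =
      ∑ k ∈ Finset.range (n + 1), (q k).eval x • iteratedDerivWithin k f S x₀ := by
    simp only [taylor_within_apply, q, eval_mul, eval_pow, eval_sub, eval_C, eval_X]
  simp only [htaylor, Finset.smul_sum, smul_smul]
  rw [Finset.sum_comm, intervalIntegral.integral_finsetSum
    (f := fun k x => (q k).eval x • iteratedDerivWithin k f S x₀) fun k _ =>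
      ((q k).continuous.smul continuous_const).intervalIntegrable _ _]
  refine Finset.sum_congr rfl fun k hk => ?_
  rw [← Finset.sum_smul, intervalIntegral.integral_smul_const,
    hq _ ((hqdeg k).trans (Finset.mem_range_succ_iff.1 hk))]

theorem IsExactQuadrature.norm_integral_sub_le [CompleteSpace F] (hq : IsExactQuadrature c b n)
    (hc : ∀ ℓ, c ℓ ∈ Icc (0 : ℝ) 1) {f : ℝ → F} (hf : ContDiffOn ℝ (n + 1) f (Icc 0 1)) {M : ℝ}
    (hM : ∀ x ∈ Icc (0 : ℝ) 1, ‖iteratedDerivWithin (n + 1) f (Icc 0 1) x‖ ≤ M) :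
    ‖(∫ x in (0 : ℝ)..1, f x) - ∑ ℓ, b ℓ • f (c ℓ)‖ ≤ (1 + ∑ ℓ, |b ℓ|) * M := by
  let T : ℝ → F := taylorWithinEval f n (Icc 0 1) 0
  have hremainder : ∀ x ∈ Icc (0 : ℝ) 1, ‖(f - T) x‖ ≤ M := fun x hx => by
    have hM0 : 0 ≤ M := (norm_nonneg _).trans (hM x hx)
    calc ‖(f - T) x‖ ≤ M * (x - 0) ^ (n + 1) / n ! :=
          taylor_mean_remainder_bound zero_le_one hf hx hM
      _ ≤ M * (x - 0) ^ (n + 1) :=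
          div_le_self (mul_nonneg hM0 (pow_nonneg (sub_nonneg.2 hx.1) _))
            (mod_cast n.factorial_pos)
      _ ≤ M := mul_le_of_le_one_right hM0
          (pow_le_one₀ (sub_nonneg.2 hx.1) ((sub_zero x).le.trans hx.2))
  have hfint : IntervalIntegrable f volume 0 1 :=
    hf.continuousOn.intervalIntegrable_of_Icc zero_le_one
  have hTint : IntervalIntegrable T volume 0 1 := by
    refine Continuous.intervalIntegrable ?_ _ _
    simp only [T, funext (taylor_within_apply f n (Icc 0 1) 0)]
    fun_prop
  have hsplit : (∫ x in (0 : ℝ)..1, f x) - ∑ ℓ, b ℓ • f (c ℓ) =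
      (∫ x in (0 : ℝ)..1, (f - T) x) - ∑ ℓ, b ℓ • (f - T) (c ℓ) := by
    simp only [Pi.sub_apply, smul_sub, Finset.sum_sub_distrib,
      intervalIntegral.integral_sub hfint hTint, T, hq.sum_smul_taylorWithinEval]
    abel
  rw [hsplit]
  exact norm_integral_sub_quadrature_le hc hremainder

theorem IsExactQuadrature.norm_sub_le_of_sum_derivWithin_eq_zero [CompleteSpace F]
    (hq : IsExactQuadrature c b n) (hc : ∀ ℓ, c ℓ ∈ Icc (0 : ℝ) 1) {f : ℝ → F}
    (hf : ContDiffOn ℝ (n + 2) f (Icc 0 1)) {M : ℝ}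
    (hM : ∀ x ∈ Icc (0 : ℝ) 1, ‖iteratedDerivWithin (n + 2) f (Icc 0 1) x‖ ≤ M)
    (hzero : ∑ ℓ, b ℓ • derivWithin f (Icc 0 1) (c ℓ) = 0) :
    ‖f 1 - f 0‖ ≤ (1 + ∑ ℓ, |b ℓ|) * M := by
  have hderiv : ContDiffOn ℝ (n + 1) (derivWithin f (Icc 0 1)) (Icc 0 1) :=
    hf.derivWithin (uniqueDiffOn_Icc zero_lt_one) (by norm_cast)
  have hftc : ∫ x in (0 : ℝ)..1, derivWithin f (Icc 0 1) x = f 1 - f 0 :=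
    intervalIntegral.integral_derivWithin_Icc_of_contDiffOn_Icc (hf.of_le (by norm_cast; omega))
      zero_le_one
  simpa only [hftc, hzero, sub_zero] using
    hq.norm_integral_sub_le hc hderiv fun x hx => by
      simpa only [iteratedDerivWithin_succ' (n := n + 1)] using hM x hx

end Quadrature

theorem norm_iteratedDerivWithin_comp_le {V F : Type*} [NormedAddCommGroup V] [NormedSpace ℝ V]
    [NormedAddCommGroup F] [NormedSpace ℝ F] {n : ℕ} {L : V → F} (hL : ContDiff ℝ n L)
    {w : ℝ → V} {S : Set ℝ} (hS : UniqueDiffOn ℝ S) (hw : ContDiffOn ℝ n w S) {x : ℝ}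
    (hx : x ∈ S) {A δ : ℝ} (hA : ∀ i ≤ n, ‖iteratedFDeriv ℝ i L (w x)‖ ≤ A)
    (hδ : ∀ i, 1 ≤ i → i ≤ n → ‖iteratedDerivWithin i w S x‖ ≤ δ ^ i) :
    ‖iteratedDerivWithin n (L ∘ w) S x‖ ≤ n ! * A * δ ^ n := by
  rw [← norm_iteratedFDerivWithin_eq_norm_iteratedDerivWithin]
  refine norm_iteratedFDerivWithin_comp_le hL.contDiffOn hw le_rfl uniqueDiffOn_univ hS
    (mapsTo_univ _ _) hx (fun i hi => ?_) fun i hi1 hi => ?_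
  · simpa only [iteratedFDerivWithin_univ] using hA i hi
  · simpa only [norm_iteratedFDerivWithin_eq_norm_iteratedDerivWithin] using hδ i hi1 hi

section PolynomialVelocity

variable {V κ : Type*} [NormedAddCommGroup V] [NormedSpace ℝ V] {J : Finset κ} {P : κ → ℝ[X]}
  {g : κ → V} {w : ℝ → V} {S : Set ℝ}

theorem iteratedDerivWithin_succ_of_hasDerivWithinAt_sum_eval_smul (hS : UniqueDiffOn ℝ S)
    (hw : ∀ x ∈ S, HasDerivWithinAt w (∑ j ∈ J, (P j).eval x • g j) S x) (i : ℕ) :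
    ∀ x ∈ S, iteratedDerivWithin (i + 1) w S x =
      ∑ j ∈ J, (derivative^[i] (P j)).eval x • g j := by
  induction i with
  | zero =>
    intro x hx
    rw [zero_add, iteratedDerivWithin_one]
    exact (hw x hx).derivWithin (hS x hx)
  | succ i ih =>
    intro x hx
    have hsum : HasDerivWithinAt (fun y => ∑ j ∈ J, (derivative^[i] (P j)).eval y • g j)
        (∑ j ∈ J, (derivative^[i + 1] (P j)).eval x • g j) S x := by
      refine HasDerivWithinAt.fun_sum fun j _ => ?_
      rw [Function.iterate_succ_apply']
      exact ((derivative^[i] (P j)).hasDerivWithinAt x S).smul_const (g j)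
    rw [iteratedDerivWithin_succ, derivWithin_congr ih (ih x hx)]
    exact hsum.derivWithin (hS x hx)

theorem contDiffOn_of_hasDerivWithinAt_sum_eval_smul (hS : UniqueDiffOn ℝ S)
    (hw : ∀ x ∈ S, HasDerivWithinAt w (∑ j ∈ J, (P j).eval x • g j) S x) :
    ContDiffOn ℝ ∞ w S := by
  refine (contDiffOn_infty_iff_derivWithin hS).2
    ⟨fun x hx => (hw x hx).differentiableWithinAt, ?_⟩
  refine ContDiffOn.congr (ContDiff.contDiffOn ?_) fun x hx => (hw x hx).derivWithin (hS x hx)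
  exact ContDiff.sum fun j _ => ((P j).contDiff_aeval ∞).smul contDiff_const

theorem norm_iteratedDerivWithin_succ_le_of_hasDerivWithinAt_sum_eval_smul {P : ℕ → ℝ[X]}
    (hP : ∀ j, (P j).natDegree ≤ j) {g : ℕ → V} {s : ℕ} (hS : UniqueDiffOn ℝ S)
    (hw : ∀ x ∈ S, HasDerivWithinAt w (∑ j ∈ Finset.range s, (P j).eval x • g j) S x)
    {h B M : ℝ} (hh0 : 0 ≤ h) (hh1 : h ≤ 1) (hB : 0 ≤ B) (hM0 : 0 ≤ M)
    (hg : ∀ j < s, ‖g j‖ ≤ B * h ^ (j + 1)) {x : ℝ} (hx : x ∈ S)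
    (hM : ∀ j < s, ∀ i ≤ j, |(derivative^[i] (P j)).eval x| ≤ M) (i : ℕ) :
    ‖iteratedDerivWithin (i + 1) w S x‖ ≤ s * (M * B) * h ^ (i + 1) := by
  have hterm : ∀ j ∈ Finset.range s,
      ‖(derivative^[i] (P j)).eval x • g j‖ ≤ M * B * h ^ (i + 1) := fun j hj => by
    have hjs : j < s := Finset.mem_range.1 hj
    rcases le_or_gt i j with hij | hji
    · calc ‖(derivative^[i] (P j)).eval x • g j‖
          = |(derivative^[i] (P j)).eval x| * ‖g j‖ := norm_smul _ _
        _ ≤ M * (B * h ^ (j + 1)) :=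
          mul_le_mul (hM j hjs i hij) (hg j hjs) (norm_nonneg _) hM0
        _ ≤ M * (B * h ^ (i + 1)) := by
          gcongr M * (B * ?_)
          exact pow_le_pow_of_le_one hh0 hh1 (by omega)
        _ = M * B * h ^ (i + 1) := (mul_assoc _ _ _).symm
    · rw [iterate_derivative_eq_zero ((hP j).trans_lt hji), eval_zero, zero_smul, norm_zero]
      positivity
  rw [iteratedDerivWithin_succ_of_hasDerivWithinAt_sum_eval_smul hS hw i x hx]
  calc _ ≤ ∑ _j ∈ Finset.range s, M * B * h ^ (i + 1) := norm_sum_le_of_le _ hterm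
    _ = s * (M * B) * h ^ (i + 1) := by
      rw [Finset.sum_const, Finset.card_range, nsmul_eq_mul]; ring

end PolynomialVelocity

section UniformBounds

theorem exists_forall_mem_finset_norm_le {X κ : Type*} [TopologicalSpace X] {E : κ → Type*}
    [∀ i, SeminormedAddCommGroup (E i)] (J : Finset κ) {K : Set X} (hK : IsCompact K)
    {f : ∀ i, X → E i} (hf : ∀ i ∈ J, ContinuousOn (f i) K) :
    ∃ M ≥ 0, ∀ i ∈ J, ∀ x ∈ K, ‖f i x‖ ≤ M := by
  obtain ⟨M, hM⟩ := hK.exists_bound_of_continuousOn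
    (continuousOn_finsetSum J fun i hi => (hf i hi).norm)
  refine ⟨max M 0, le_max_right _ _, fun i hi x hx => ?_⟩
  calc ‖f i x‖ ≤ ∑ i ∈ J, ‖f i x‖ :=
        Finset.single_le_sum (f := fun i => ‖f i x‖) (fun _ _ => norm_nonneg _) hi
    _ ≤ max M 0 := (Real.le_norm_self _).trans ((hM x hx).trans (le_max_left _ _))

theorem exists_forall_abs_eval_iterate_derivative_le (P : ℕ → ℝ[X]) (s : ℕ) {K : Set ℝ}
    (hK : IsCompact K) :
    ∃ M ≥ 0, ∀ x ∈ K, ∀ j < s, ∀ i ≤ j, |(derivative^[i] (P j)).eval x| ≤ M := by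
  obtain ⟨M, hM0, hM⟩ := exists_forall_mem_finset_norm_le
    (Finset.range s ×ˢ Finset.range s) hK
    (f := fun ij x => (derivative^[ij.1] (P ij.2)).eval x) fun _ _ => Polynomial.continuousOn _
  refine ⟨M, hM0, fun x hx j hj i hij => hM (i, j) ?_ x hx⟩
  exact Finset.mk_mem_product (Finset.mem_range.2 (hij.trans_lt hj)) (Finset.mem_range.2 hj)

theorem exists_eventually_forall_mem_finset_norm_le {X κ E G : Type*} [SeminormedAddCommGroup E]
    [SeminormedAddCommGroup G] {l : Filter X} (J : Finset κ) {f : κ → X → E} {g : κ → X → G}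
    (hfg : ∀ j ∈ J, f j =O[l] g j) :
    ∃ B ≥ 0, ∀ᶠ x in l, ∀ j ∈ J, ‖f j x‖ ≤ B * ‖g j x‖ := by
  choose! B hB0 hB using fun j hj => (hfg j hj).exists_nonneg
  refine ⟨∑ j ∈ J, B j, Finset.sum_nonneg hB0, (eventually_all_finset J).2 fun j hj => ?_⟩
  filter_upwards [(hB j hj).bound] with x hx
  exact hx.trans (mul_le_mul_of_nonneg_right (Finset.single_le_sum hB0 hj) (norm_nonneg _))

theorem isBigO_nhdsGT_zero_iff {E : Type*} [SeminormedAddCommGroup E] {f : ℝ → E} {g : ℝ → ℝ}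
    (hg : ∀ h, 0 < h → 0 ≤ g h) :
    f =O[𝓝[>] 0] g ↔ ∃ C > 0, ∃ h₁ > 0, ∀ h, 0 < h → h ≤ h₁ → ‖f h‖ ≤ C * g h := by
  simp only [isBigO_iff', Filter.Eventually, mem_nhdsGT_iff_exists_Ioc_subset]
  refine exists_congr fun C => and_congr_right fun _ => exists_congr fun h₁ =>
    and_congr_right fun _ => ⟨fun H h hh hh₁ => ?_, fun H h hh => ?_⟩
  · have hle : ‖f h‖ ≤ C * ‖g h‖ := H ⟨hh, hh₁⟩
    rwa [Real.norm_of_nonneg (hg h hh)] at hle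
  · change ‖f h‖ ≤ C * ‖g h‖
    rw [Real.norm_of_nonneg (hg h hh.1)]
    exact H h hh.1 hh.2

end UniformBounds

section Conservation

variable {V F ι : Type*} [NormedAddCommGroup V] [NormedSpace ℝ V] [NormedAddCommGroup F]
  [NormedSpace ℝ F] [CompleteSpace F] [Fintype ι] {c b : ι → ℝ} {n s : ℕ} {L : V → F}
  {P : ℕ → ℝ[X]}

theorem norm_sub_le_of_sum_quadrature_fderiv_eq_zero (hL : ContDiff ℝ (n + 2) L)
    (hc : ∀ ℓ, c ℓ ∈ Icc (0 : ℝ) 1) (hq : IsExactQuadrature c b n)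
    {w v : ℝ → V} (hw : ContDiffOn ℝ (n + 2) w (Icc 0 1))
    (hwv : ∀ x ∈ Icc (0 : ℝ) 1, HasDerivWithinAt w (v x) (Icc 0 1) x) {A δ : ℝ}
    (hA : ∀ x ∈ Icc (0 : ℝ) 1, ∀ i ≤ n + 2, ‖iteratedFDeriv ℝ i L (w x)‖ ≤ A)
    (hδ : ∀ x ∈ Icc (0 : ℝ) 1, ∀ i, 1 ≤ i → i ≤ n + 2 →
      ‖iteratedDerivWithin i w (Icc 0 1) x‖ ≤ δ ^ i)
    (hzero : ∑ ℓ, b ℓ • fderiv ℝ L (w (c ℓ)) (v (c ℓ)) = 0) :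
    ‖L (w 1) - L (w 0)‖ ≤ (1 + ∑ ℓ, |b ℓ|) * ((n + 2)! * A * δ ^ (n + 2)) := by
  have hI : UniqueDiffOn ℝ (Icc (0 : ℝ) 1) := uniqueDiffOn_Icc zero_lt_one
  refine hq.norm_sub_le_of_sum_derivWithin_eq_zero hc (f := L ∘ w) (hL.comp_contDiffOn hw)
    (fun x hx => norm_iteratedDerivWithin_comp_le (mod_cast hL) hI (mod_cast hw) hx
      (hA x hx) (hδ x hx)) ?_
  rw [← hzero]
  refine Finset.sum_congr rfl fun ℓ _ => congrArg _ ?_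
  have hLw : HasFDerivAt L (fderiv ℝ L (w (c ℓ))) (w (c ℓ)) :=
    (hL.differentiable (by norm_cast)).differentiableAt.hasFDerivAt
  exact (hLw.comp_hasDerivWithinAt _ (hwv _ (hc ℓ))).derivWithin (hI _ (hc ℓ))

theorem hasDerivWithinAt_comp_mul_right {f : ℝ → V} {f' : V} {a x : ℝ} (ha : 0 ≤ a)
    (hf : HasDerivWithinAt f f' (Icc 0 a) (x * a)) :
    HasDerivWithinAt (fun y => f (y * a)) (a • f') (Icc 0 1) x := by
  have hmaps : MapsTo (· * a) (Icc 0 1) (Icc 0 a) := fun _ hy =>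
    ⟨mul_nonneg hy.1 ha, mul_le_of_le_one_left ha hy.2⟩
  exact hf.scomp x (hasDerivAt_mul_const a).hasDerivWithinAt hmaps

theorem norm_sub_le_of_polynomial_velocity (hL : ContDiff ℝ (n + 2) L)
    (hc : ∀ ℓ, c ℓ ∈ Icc (0 : ℝ) 1) (hq : IsExactQuadrature c b n)
    (hP : ∀ j, (P j).natDegree ≤ j) {h A B M D : ℝ} (hh : h ∈ Ioc (0 : ℝ) 1) (hB : 0 ≤ B)
    (hM0 : 0 ≤ M) (hM : ∀ x ∈ Icc (0 : ℝ) 1, ∀ j < s, ∀ i ≤ j, |(derivative^[i] (P j)).eval x| ≤ M)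
    (hD1 : 1 ≤ D) (hD : s * (M * B) ≤ D) {v : ℝ → V} {g : ℕ → V}
    (hA : ∀ t ∈ Icc 0 h, ∀ i ≤ n + 2, ‖iteratedFDeriv ℝ i L (v t)‖ ≤ A)
    (hg : ∀ j < s, ‖g j‖ ≤ B * h ^ j)
    (hv : ∀ x ∈ Icc (0 : ℝ) 1,
      HasDerivWithinAt v (∑ j ∈ Finset.range s, (P j).eval x • g j) (Icc 0 h) (x * h))
    (hzero : ∑ ℓ, b ℓ • fderiv ℝ L (v (c ℓ * h))
      (∑ j ∈ Finset.range s, (P j).eval (c ℓ) • g j) = 0) :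
    ‖L (v h) - L (v 0)‖ ≤ (1 + ∑ ℓ, |b ℓ|) * ((n + 2)! * A * (D * h) ^ (n + 2)) := by
  have hI : UniqueDiffOn ℝ (Icc (0 : ℝ) 1) := uniqueDiffOn_Icc zero_lt_one
  let w : ℝ → V := fun x => v (x * h)
  have hw : ∀ x ∈ Icc (0 : ℝ) 1, HasDerivWithinAt w
      (∑ j ∈ Finset.range s, (P j).eval x • h • g j) (Icc 0 1) x := fun x hx => by
    simpa only [Finset.smul_sum, smul_comm h] using
      hasDerivWithinAt_comp_mul_right hh.1.le (hv x hx)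
  have hwδ : ∀ x ∈ Icc (0 : ℝ) 1, ∀ i, 1 ≤ i → i ≤ n + 2 →
      ‖iteratedDerivWithin i w (Icc 0 1) x‖ ≤ (D * h) ^ i := by
    rintro x hx (_ | i) hi -
    · omega
    have hgh : ∀ j < s, ‖h • g j‖ ≤ B * h ^ (j + 1) := fun j hj => by
      rw [norm_smul, Real.norm_of_nonneg hh.1.le, pow_succ', mul_left_comm]
      exact mul_le_mul_of_nonneg_left (hg j hj) hh.1.le
    calc _ ≤ s * (M * B) * h ^ (i + 1) :=
          norm_iteratedDerivWithin_succ_le_of_hasDerivWithinAt_sum_eval_smul hP hI hw hh.1.le hh.2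
            hB hM0 hgh hx (hM x hx) i
      _ ≤ D ^ (i + 1) * h ^ (i + 1) :=
          mul_le_mul_of_nonneg_right (hD.trans (le_self_pow₀ hD1 i.succ_ne_zero))
            (pow_nonneg hh.1.le _)
      _ = (D * h) ^ (i + 1) := (mul_pow _ _ _).symm
  have hzero_w : ∑ ℓ, b ℓ • fderiv ℝ L (w (c ℓ))
      (∑ j ∈ Finset.range s, (P j).eval (c ℓ) • h • g j) = 0 := by
    simp only [smul_comm _ h, ← Finset.smul_sum, map_smul, w, hzero, smul_zero]
  simpa only [w, one_mul, zero_mul] using norm_sub_le_of_sum_quadrature_fderiv_eq_zero hL hc hq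
    (mod_cast contDiffOn_infty.1 (contDiffOn_of_hasDerivWithinAt_sum_eval_smul hI hw) (n + 2))
    hw (fun x hx => hA _ ⟨mul_nonneg hx.1 hh.1.le, mul_le_of_le_one_left hh.1.le hx.2⟩) hwδ hzero_w

theorem isBigO_sub_of_sum_quadrature_fderiv_eq_zero (hL : ContDiff ℝ (n + 2) L)
    (hc : ∀ ℓ, c ℓ ∈ Icc (0 : ℝ) 1) (hq : IsExactQuadrature c b n)
    (hP : ∀ j, (P j).natDegree ≤ j) {K : Set V} (hK : IsCompact K)
    {u : ℝ → ℝ → V} (hu : ∀ᶠ h in 𝓝[>] 0, ∀ t ∈ Icc 0 h, u h t ∈ K) {g : ℕ → ℝ → V}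
    (hg : ∀ j < s, g j =O[𝓝[>] 0] fun h => h ^ j)
    (hu' : ∀ᶠ h in 𝓝[>] 0, ∀ x ∈ Icc (0 : ℝ) 1,
      HasDerivWithinAt (u h) (∑ j ∈ Finset.range s, (P j).eval x • g j h) (Icc 0 h) (x * h))
    (hzero : ∀ᶠ h in 𝓝[>] 0, ∑ ℓ, b ℓ • fderiv ℝ L (u h (c ℓ * h))
      (∑ j ∈ Finset.range s, (P j).eval (c ℓ) • g j h) = 0) :
    (fun h => L (u h h) - L (u h 0)) =O[𝓝[>] 0] fun h => h ^ (n + 2) := by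
  obtain ⟨A, -, hA⟩ := exists_forall_mem_finset_norm_le (Finset.range (n + 3)) hK
    (f := fun i => iteratedFDeriv ℝ i L) fun i hi =>
      (hL.continuous_iteratedFDeriv (by
        exact_mod_cast Finset.mem_range_succ_iff.1 hi)).continuousOn
  obtain ⟨M, hM0, hM⟩ :=
    exists_forall_abs_eval_iterate_derivative_le P s (isCompact_Icc (a := (0 : ℝ)) (b := 1))
  obtain ⟨B, hB0, hB⟩ := exists_eventually_forall_mem_finset_norm_le (Finset.range s)
    fun j hj => hg j (Finset.mem_range.1 hj)
  let D : ℝ := max 1 (s * (M * B))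
  refine IsBigO.of_bound ((1 + ∑ ℓ, |b ℓ|) * ((n + 2)! * A * D ^ (n + 2))) ?_
  filter_upwards [hu, hu', hzero, hB, Ioc_mem_nhdsGT zero_lt_one] with h hu hu' hzero hB hh
  have hgB : ∀ j < s, ‖g j h‖ ≤ B * h ^ j := fun j hj => by
    simpa only [norm_pow, Real.norm_of_nonneg hh.1.le] using hB j (Finset.mem_range.2 hj)
  calc ‖L (u h h) - L (u h 0)‖
      ≤ (1 + ∑ ℓ, |b ℓ|) * ((n + 2)! * A * (D * h) ^ (n + 2)) :=
        norm_sub_le_of_polynomial_velocity hL hc hq hP hh hB0 hM0 hM (le_max_left _ _)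
          (le_max_right _ _)
          (fun t ht i hi => hA i (Finset.mem_range_succ_iff.2 hi) _ (hu t ht)) hgB hu' hzero
    _ = (1 + ∑ ℓ, |b ℓ|) * ((n + 2)! * A * D ^ (n + 2)) * ‖h ^ (n + 2)‖ := by
        rw [norm_pow, Real.norm_of_nonneg hh.1.le]; ring

end Conservation

section LineIntegralMethod

theorem exists_natDegree_le_eval_eq_legP (j : ℕ) :
    ∃ q : ℝ[X], q.natDegree ≤ j ∧ ∀ x, q.eval x = legP j x := by
  refine ⟨C (Real.sqrt (2 * j + 1) / j !) * derivative^[j] ((X ^ 2 - X) ^ j), ?_, fun x => ?_⟩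
  · have hpow : ((X ^ 2 - X : ℝ[X]) ^ j).natDegree ≤ j * 2 :=
      natDegree_pow_le_of_le j (by compute_degree)
    calc _ ≤ ((X ^ 2 - X : ℝ[X]) ^ j).natDegree - j :=
          (natDegree_C_mul_le _ _).trans (natDegree_iterate_derivative _ _)
      _ ≤ j := by omega
  · rw [eval_mul, eval_C, legP]

theorem isBigO_one_of_eq_one_sub_pow_mul {s k p : ℕ} {e : ℕ → ℕ} {α η : ℕ → ℝ → ℝ}
    (hα : ∀ j, k ≤ j → j < s → α j =O[𝓝[>] 0] fun h => h ^ p) (hη₁ : ∀ j < k, ∀ h, η j h = 1)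
    (hη₂ : ∀ j, k ≤ j → j < s → ∀ h, η j h = 1 - h ^ e j * α j h) :
    ∀ j < s, η j =O[𝓝[>] 0] fun _ => (1 : ℝ) := by
  have hpow (i : ℕ) : (fun h : ℝ => h ^ i) =O[𝓝[>] 0] fun _ => (1 : ℝ) :=
    ((continuous_pow i).tendsto 0).isBigO_one ℝ |>.mono nhdsWithin_le_nhds
  intro j hj
  rcases lt_or_ge j k with hjk | hkj
  · exact funext (hη₁ j hjk) ▸ isBigO_refl _ _
  · rw [funext (hη₂ j hkj hj)]
    simpa only [mul_one] using (isBigO_refl _ _).sub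
      ((hpow (e j)).mul ((hα j hkj hj).trans (hpow p)))

theorem sum_range_mul_eq_zero_of_sum_Ico_eq {R : Type*} [CommRing R] {k s : ℕ} (hks : k ≤ s)
    {η β x : ℕ → R} (hη₁ : ∀ j < k, η j = 1) (hη₂ : ∀ j, k ≤ j → j < s → η j = 1 - β j)
    (hβ : ∑ j ∈ Finset.Ico k s, β j * x j = ∑ j ∈ Finset.range s, x j) :
    ∑ j ∈ Finset.range s, η j * x j = 0 := by
  have hlow : ∑ j ∈ Finset.range k, η j * x j = ∑ j ∈ Finset.range k, x j :=
    Finset.sum_congr rfl fun j hj => by rw [hη₁ j (Finset.mem_range.1 hj), one_mul]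
  have hhigh : ∑ j ∈ Finset.Ico k s, η j * x j =
      ∑ j ∈ Finset.Ico k s, x j - ∑ j ∈ Finset.Ico k s, β j * x j := by
    rw [← Finset.sum_sub_distrib]
    refine Finset.sum_congr rfl fun j hj => ?_
    obtain ⟨hkj, hjs⟩ := Finset.mem_Ico.1 hj
    rw [hη₂ j hkj hjs, sub_mul, one_mul]
  rw [← Finset.sum_range_add_sum_Ico _ hks, hlow, hhigh, hβ, ← Finset.sum_range_add_sum_Ico x hks]
  ring

theorem sum_smul_fderiv_sum_eq_sum_mul_inner_sum_gradient {V ι κ : Type*} [NormedAddCommGroup V]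
    [InnerProductSpace ℝ V] [CompleteSpace V] [Fintype ι] (J : Finset κ) (f : V → ℝ) (y : ι → V)
    (b : ι → ℝ) (p : κ → ι → ℝ) (η : κ → ℝ) (v : κ → V) :
    ∑ ℓ, b ℓ • fderiv ℝ f (y ℓ) (∑ j ∈ J, p j ℓ • η j • v j) =
      ∑ j ∈ J, η j * ⟪∑ ℓ, (b ℓ * p j ℓ) • ∇ f (y ℓ), v j⟫ := by
  simp only [map_sum, map_smul, smul_eq_mul, Finset.mul_sum, sum_inner, real_inner_smul_left,
    inner_gradient_left]
  rw [Finset.sum_comm]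
  exact Finset.sum_congr rfl fun j _ => Finset.sum_congr rfl fun ℓ _ => by ring

theorem stmt15_general {V ι σ : Type*} [NormedAddCommGroup V] [InnerProductSpace ℝ V]
    [CompleteSpace V] [Fintype ι] [Finite σ] {k n p s : ℕ} (hks : k ≤ s) {e : ℕ → ℕ}
    {P : ℕ → ℝ → ℝ} (hP : ∀ j, ∃ q : ℝ[X], q.natDegree ≤ j ∧ ∀ x, q.eval x = P j x)
    {L : σ → V → ℝ} (hL : ∀ i, ContDiff ℝ (n + 2) (L i))
    {c b : ι → ℝ} (hc : ∀ ℓ, c ℓ ∈ Icc (0 : ℝ) 1) (hq : IsExactQuadrature c b n)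
    {h₀ : ℝ} (hh₀ : 0 < h₀) {u : ℝ → ℝ → V} {K : Set V} (hK : IsCompact K)
    (huK : ∀ h ∈ Ioc 0 h₀, ∀ t ∈ Icc 0 h, u h t ∈ K) {γ : ℕ → ℝ → V}
    (hγ : ∀ j < s, ∃ C > 0, ∃ h₁ > 0, ∀ h, 0 < h → h ≤ h₁ → ‖γ j h‖ ≤ C * h ^ j)
    {Φ : ℕ → ℝ → σ → V} (hΦ : ∀ j h i, Φ j h i = ∑ ℓ, (b ℓ * P j (c ℓ)) • ∇ (L i) (u h (c ℓ * h)))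
    {α : ℕ → ℝ → ℝ} (hα : ∀ j, k ≤ j → j < s →
      ∃ C > 0, ∃ h₁ > 0, ∀ h, 0 < h → h ≤ h₁ → |α j h| ≤ C * h ^ p)
    (hαsolve : ∀ h ∈ Ioc 0 h₀, ∀ i,
      ∑ j ∈ Finset.Ico k s, h ^ e j * α j h * ⟪Φ j h i, γ j h⟫ =
        ∑ j ∈ Finset.range s, ⟪Φ j h i, γ j h⟫)
    {η : ℕ → ℝ → ℝ} (hη₁ : ∀ j < k, ∀ h, η j h = 1)
    (hη₂ : ∀ j, k ≤ j → j < s → ∀ h, η j h = 1 - h ^ e j * α j h)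
    (hu' : ∀ h ∈ Ioc 0 h₀, ∀ x ∈ Icc (0 : ℝ) 1,
      HasDerivWithinAt (u h) (∑ j ∈ Finset.range s, P j x • η j h • γ j h) (Icc 0 h) (x * h)) :
    ∃ C > 0, ∃ h₁ > 0, ∀ h, 0 < h → h ≤ h₁ →
      ∀ i, |L i (u h h) - L i (u h 0)| ≤ C * h ^ (n + 2) := by
  cases nonempty_fintype σ
  choose Q hQdeg hQ using hP
  have hγO : ∀ j < s, γ j =O[𝓝[>] 0] fun h => h ^ j := fun j hj =>
    (isBigO_nhdsGT_zero_iff fun h hh => pow_nonneg hh.le j).2 (hγ j hj)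
  have hηO : ∀ j < s, η j =O[𝓝[>] 0] fun _ => (1 : ℝ) :=
    isBigO_one_of_eq_one_sub_pow_mul (fun j hkj hjs =>
      (isBigO_nhdsGT_zero_iff fun h hh => pow_nonneg hh.le p).2 (hα j hkj hjs)) hη₁ hη₂
  have horth : ∀ h ∈ Ioc 0 h₀, ∀ i, ∑ ℓ, b ℓ • fderiv ℝ (L i) (u h (c ℓ * h))
      (∑ j ∈ Finset.range s, (Q j).eval (c ℓ) • η j h • γ j h) = 0 := fun h hh i => by
    simp only [hQ, sum_smul_fderiv_sum_eq_sum_mul_inner_sum_gradient, ← hΦ]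
    exact sum_range_mul_eq_zero_of_sum_Ico_eq hks (fun j hj => hη₁ j hj h)
      (fun j hkj hjs => hη₂ j hkj hjs h) (hαsolve h hh i)
  have hmem : Ioc 0 h₀ ∈ 𝓝[>] (0 : ℝ) := Ioc_mem_nhdsGT hh₀
  have hLO : (fun h i => L i (u h h) - L i (u h 0)) =O[𝓝[>] 0] fun h => h ^ (n + 2) :=
    isBigO_pi.2 fun i => isBigO_sub_of_sum_quadrature_fderiv_eq_zero (hL i) hc hq hQdeg hK
      (mem_of_superset hmem huK)
      (fun j hj => by simpa only [one_smul] using (hηO j hj).smul (hγO j hj))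
      (mem_of_superset hmem fun h hh x hx => by simpa only [hQ] using hu' h hh x hx)
      (mem_of_superset hmem fun h hh => horth h hh i)
  obtain ⟨C, hC, h₁, hh₁, hbound⟩ :=
    (isBigO_nhdsGT_zero_iff fun h hh => pow_nonneg hh.le _).1 hLO
  exact ⟨C, hC, h₁, hh₁, fun h hh hle i => (norm_le_pi_norm _ i).trans (hbound h hh hle)⟩

end LineIntegralMethod

end Development

/-- Theorem 4 of the paper, asymptotic part.  With `L : ℝ^d → ℝ^ν` of
class `C^∞`, a quadrature `(ĉ_ℓ, b̂_ℓ)` exact on `Π_{2r-1}`, polynomial maps `u_h ∈ Π_s`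
with range in a fixed compact set, vectors `γ̂_j(h) = O(h^j)`, coefficients `η̂_j(h) = 1`
for `j ≤ s-ν-1` and `η̂_j(h) = 1 - h^{2(s-1-j)} α̂_j(h)` otherwise with `α̂_j(h) = O(h²)`
solving `∑_{j=s-ν}^{s-1} h^{2(s-1-j)} α̂_j(h) φ̂_j(h)ᵀ γ̂_j(h) = ∑_{j<s} φ̂_j(h)ᵀ γ̂_j(h)`,
where `φ̂_j(h) = ∑_ℓ b̂_ℓ P_j(ĉ_ℓ) ∇L(u_h(ĉ_ℓ h))`, and with
`u_h'(ch) = ∑_{j<s} P_j(c) η̂_j(h) γ̂_j(h)` on `[0,1]`, one has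
`L(u_h(h)) - L(u_h(0)) = O(h^{2r+1})` as `h → 0⁺`. -/
theorem stmt15 (m : ℕ) (hm : 1 ≤ m) (s ν r : ℕ) (hν : 1 ≤ ν) (hνs : ν < s) (hr : s ≤ r)
    (L : Fin ν → EuclideanSpace ℝ (Fin (2 * m)) → ℝ) (hL : ∀ i, ContDiff ℝ (⊤ : ℕ∞) (L i))
    (ch bh : Fin r → ℝ) (hch : ∀ ℓ, ch ℓ ∈ Set.Icc (0:ℝ) 1)
    (hquad : ∀ q : Polynomial ℝ, q.natDegree ≤ 2 * r - 1 →
      ∑ ℓ, bh ℓ * q.eval (ch ℓ) = ∫ x in (0:ℝ)..1, q.eval x)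
    (h₀ : ℝ) (hh₀ : 0 < h₀)
    (u : ℝ → ℝ → EuclideanSpace ℝ (Fin (2 * m)))
    (hupoly : ∀ h ∈ Set.Ioc (0:ℝ) h₀,
      ∃ a : Fin (s + 1) → EuclideanSpace ℝ (Fin (2 * m)),
        ∀ t : ℝ, u h t = ∑ i : Fin (s + 1), t ^ (i : ℕ) • a i)
    (K : Set (EuclideanSpace ℝ (Fin (2 * m)))) (hK : IsCompact K)
    (huK : ∀ h ∈ Set.Ioc (0:ℝ) h₀, ∀ t ∈ Set.Icc 0 h, u h t ∈ K)
    (γc : ℕ → ℝ → EuclideanSpace ℝ (Fin (2 * m)))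
    (hγc : ∀ j, j < s → ∃ C > (0:ℝ), ∃ h₁ > (0:ℝ), ∀ h : ℝ, 0 < h → h ≤ h₁ →
      ‖γc j h‖ ≤ C * h ^ j)
    (φ : ℕ → ℝ → Fin ν → EuclideanSpace ℝ (Fin (2 * m)))
    (hφ : ∀ j (h : ℝ) i,
      φ j h i = ∑ ℓ, (bh ℓ * legP j (ch ℓ)) • gradient (L i) (u h (ch ℓ * h)))
    (α : ℕ → ℝ → ℝ)
    (hα : ∀ j, s - ν ≤ j → j ≤ s - 1 →
      ∃ C > (0:ℝ), ∃ h₁ > (0:ℝ), ∀ h : ℝ, 0 < h → h ≤ h₁ → |α j h| ≤ C * h ^ 2)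
    (hαsolve : ∀ h ∈ Set.Ioc (0:ℝ) h₀, ∀ i : Fin ν,
      ∑ j ∈ Finset.Ico (s - ν) s, h ^ (2 * (s - 1 - j)) * α j h * ⟪φ j h i, γc j h⟫ =
      ∑ j ∈ Finset.range s, ⟪φ j h i, γc j h⟫)
    (η : ℕ → ℝ → ℝ)
    (hη₁ : ∀ j, j ≤ s - ν - 1 → ∀ h : ℝ, η j h = 1)
    (hη₂ : ∀ j, s - ν ≤ j → j ≤ s - 1 → ∀ h : ℝ,
      η j h = 1 - h ^ (2 * (s - 1 - j)) * α j h)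
    (hu' : ∀ h ∈ Set.Ioc (0:ℝ) h₀, ∀ cc ∈ Set.Icc (0:ℝ) 1,
      HasDerivAt (u h) (∑ j ∈ Finset.range s, legP j cc • (η j h • γc j h)) (cc * h)) :
    ∃ C > (0:ℝ), ∃ h₁ > (0:ℝ), ∀ h : ℝ, 0 < h → h ≤ min h₀ h₁ →
      ∀ i : Fin ν, |L i (u h h) - L i (u h 0)| ≤ C * h ^ (2 * r + 1) := by
  obtain _ | r := r
  · omega
  obtain ⟨C, hC, h₁, hh₁, hbound⟩ := stmt15_general (n := 2 * r + 1) (s.sub_le ν)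
    exists_natDegree_le_eval_eq_legP (fun i => mod_cast contDiff_infty.1 (hL i) (2 * r + 3)) hch
    hquad hh₀ hK huK hγc hφ (fun j hkj hjs => hα j hkj (Nat.le_sub_one_of_lt hjs)) hαsolve
    (fun j hj => hη₁ j (Nat.le_sub_one_of_lt hj))
    (fun j hkj hjs => hη₂ j hkj (Nat.le_sub_one_of_lt hjs))
    (fun h hh x hx => (hu' h hh x hx).hasDerivWithinAt)
  exact ⟨C, hC, h₁, hh₁, fun h hh hle => hbound h hh (hle.trans (min_le_right _ _))⟩
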